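/- Let g ∈ L¹(ℝ₊)^{p×q} be a solution of the twofold Ellis–Gohberg inverse problem for the data set {a,b,c,d}, and let M₁₁, M₁₂, M₂₁, M₂₂ be the operators built from α = e_p + a, β = b, γ = c, δ = e_q + d. Then M₁₁ and M₂₂ are invertible operators on L¹(ℝ₊)^p and L¹(ℝ₋)^q respectively, and H₊,g = −M₁₁⁻¹M₁₂ = −M₁₂M₂₂⁻¹, H₋,g* = −M₂₁M₁₁⁻¹ = −M₂₂⁻¹M₂₁, g = −M₁₁⁻¹b and g* = −M₂₂⁻¹c (in the last two identities the operators are applied columnwise to the matrix functions b and c). -/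

import Mathlib

/-!
The operator matrix `M = [M₁₁, M₁₂; M₂₁, M₂₂]` is the two-sided inverse of
`Ω = [1, H₊,g; H₋,g*, 1]`. Granting this, the Schur complements `1 - H₊,g H₋,g*` and
`1 - H₋,g* H₊,g` of `Ω` invert `M₁₁` and `M₂₂`, and the formulas for the Hankel operators are the
off-diagonal entries of `Ω M = 1` and `M Ω = 1` (`schur_inverse`).

Applying the Fourier transform entrywise turns convolution into the product and `f ↦ f*` into the
conjugate transpose over the commutative star ring `ℝ → ℂ`. The transforms of the integrable
functions on the two half-lines form additive subgroups `P` and `M`, closed under products,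
exchanged by the involution, and with `P ∩ M = 0` (`half_splits`). A Wiener–Hopf or Hankel operator
becomes multiplication by a matrix followed by a projection; the projection `y` of `x` is determined
by `y ∈ P` and `x - y ∈ M` (`IsProj`, `isProj_kernel`).

The inverse problem then becomes a purely algebraic one (`AlgSol`). Its four conditions force
`α*α - γ*γ = 1`, `α*β = γ*δ` and `δ*δ - β*β = 1`: in each case the difference of both sides lies in
`P` and in `M`. Since a left inverse of a square matrix over a commutative ring is also a right
inverse, the dual relations `αα* - ββ* = 1`, `γα* = δβ*`, `αγ* = βδ*` follow (`AlgSol.dual`).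
These give the first columns of `Ω M = 1` and `M Ω = 1` (`AlgSol.right`, `AlgSol.left`) and
`M₁₁ g = -b` (`AlgSol.column`). The second columns and `M₂₂ g* = -c` are the same statements for the
reflected problem, with data `d, c, b, a` and solution `g*` (`AlgSol.symm`).
-/

open MeasureTheory Set Matrix
open scoped ComplexConjugate

noncomputable section

abbrev MatF (r s : ℕ) := ℝ → Matrix (Fin r) (Fin s) ℂ

def conv {r s u : ℕ} (f : MatF r s) (h : MatF s u) : MatF r u :=
  fun t => Matrix.of fun i j => ∫ τ : ℝ, (f (t - τ) * h τ) i j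

def adjF {r s : ℕ} (f : MatF r s) : MatF s r := fun t => (f (-t))ᴴ

def L1Plus {r s : ℕ} (f : MatF r s) : Prop :=
  (∀ i j, Integrable fun t => f t i j) ∧ ∀ t < (0:ℝ), f t = 0

def L1Minus {r s : ℕ} (f : MatF r s) : Prop :=
  (∀ i j, Integrable fun t => f t i j) ∧ ∀ t > (0:ℝ), f t = 0

def μP : Measure ℝ := volume.restrict (Ici 0)
def μM : Measure ℝ := volume.restrict (Iic 0)

abbrev L1P (n : ℕ) := Lp (Fin n → ℂ) 1 μP
abbrev L1M (n : ℕ) := Lp (Fin n → ℂ) 1 μM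

def IsHP {k m : ℕ} (r : MatF k m) (H : L1M m →L[ℂ] L1P k) : Prop :=
  ∀ f : L1M m, ⇑(H f) =ᵐ[μP] fun t => ∫ s, (r (t - s)).mulVec (f s) ∂μM

def IsHM {k m : ℕ} (r : MatF k m) (H : L1P m →L[ℂ] L1M k) : Prop :=
  ∀ f : L1P m, ⇑(H f) =ᵐ[μM] fun t => ∫ s, (r (t - s)).mulVec (f s) ∂μP

def IsTP {k m : ℕ} (r₀ : Matrix (Fin k) (Fin m) ℂ) (r : MatF k m)
    (T : L1P m →L[ℂ] L1P k) : Prop :=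
  ∀ f : L1P m, ⇑(T f) =ᵐ[μP] fun t => r₀.mulVec (f t) + ∫ s, (r (t - s)).mulVec (f s) ∂μP

def IsTM {k m : ℕ} (r₀ : Matrix (Fin k) (Fin m) ℂ) (r : MatF k m)
    (T : L1M m →L[ℂ] L1M k) : Prop :=
  ∀ f : L1M m, ⇑(T f) =ᵐ[μM] fun t => r₀.mulVec (f t) + ∫ s, (r (t - s)).mulVec (f s) ∂μM

def blockCLM {X Y Z W : Type*} [NormedAddCommGroup X] [NormedSpace ℂ X]
    [NormedAddCommGroup Y] [NormedSpace ℂ Y] [NormedAddCommGroup Z] [NormedSpace ℂ Z]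
    [NormedAddCommGroup W] [NormedSpace ℂ W]
    (A : X →L[ℂ] Z) (B : Y →L[ℂ] Z) (C : X →L[ℂ] W) (D : Y →L[ℂ] W) :
    (X × Y) →L[ℂ] (Z × W) :=
  (A.comp (ContinuousLinearMap.fst ℂ X Y) + B.comp (ContinuousLinearMap.snd ℂ X Y)).prod
    (C.comp (ContinuousLinearMap.fst ℂ X Y) + D.comp (ContinuousLinearMap.snd ℂ X Y))

def InvertibleCLM {X Y : Type*} [NormedAddCommGroup X] [NormedSpace ℂ X]
    [NormedAddCommGroup Y] [NormedSpace ℂ Y] (T : X →L[ℂ] Y) : Prop :=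
  ∃ S : Y →L[ℂ] X, S.comp T = ContinuousLinearMap.id ℂ X ∧ T.comp S = ContinuousLinearMap.id ℂ Y

def AeZeroPos {r s : ℕ} (f : MatF r s) : Prop := ∀ᵐ t : ℝ, 0 < t → f t = 0
def AeZeroNeg {r s : ℕ} (f : MatF r s) : Prop := ∀ᵐ t : ℝ, t < 0 → f t = 0

def EGSol {p q : ℕ} (a : MatF p p) (b : MatF p q) (c : MatF q p) (d : MatF q q)
    (g : MatF p q) : Prop :=
  AeZeroPos (fun t => a t + conv g c t) ∧
  AeZeroNeg (fun t => adjF g t + conv (adjF g) a t + c t) ∧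
  AeZeroNeg (fun t => d t + conv (adjF g) b t) ∧
  AeZeroPos (fun t => g t + conv g d t + b t)


def colF {r s : ℕ} (f : MatF r s) (j : Fin s) : ℝ → Fin r → ℂ := fun t i => f t i j

/-! ### Algebra of the inverse problem -/

section Algebra

variable {R : Type*} [CommRing R] [StarRing R]

/-- The vectors all of whose entries lie in `P`. -/
def vecIn (P : AddSubgroup R) (n : ℕ) : AddSubgroup (Fin n → R) where
  carrier := {x | ∀ i, x i ∈ P}
  zero_mem' _ := P.zero_mem
  add_mem' hx hy i := P.add_mem (hx i) (hy i)
  neg_mem' hx i := P.neg_mem (hx i)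

/-- The matrices all of whose entries lie in `P`. -/
def matIn (P : AddSubgroup R) (m n : ℕ) : AddSubgroup (Matrix (Fin m) (Fin n) R) where
  carrier := {X | ∀ i j, X i j ∈ P}
  zero_mem' _ _ := P.zero_mem
  add_mem' hx hy i j := P.add_mem (hx i j) (hy i j)
  neg_mem' hx i j := P.neg_mem (hx i j)

/-- `P` and `M` behave like the transforms of the integrable functions supported on the two
half-lines: each is closed under products, they are exchanged by the involution, and they
intersect trivially. -/
structure Splits (P M : AddSubgroup R) : Prop where
  mulP : ∀ {x y : R}, x ∈ P → y ∈ P → x * y ∈ P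
  mulM : ∀ {x y : R}, x ∈ M → y ∈ M → x * y ∈ M
  starP : ∀ {x : R}, x ∈ P → star x ∈ M
  starM : ∀ {x : R}, x ∈ M → star x ∈ P
  disj : ∀ {x : R}, x ∈ P → x ∈ M → x = 0

theorem Splits.symm {P M : AddSubgroup R} (h : Splits P M) : Splits M P :=
  ⟨h.mulM, h.mulP, h.starM, h.starP, fun hx hy => h.disj hy hx⟩

variable {P M : AddSubgroup R} {k m n : ℕ}

theorem Splits.matMul (h : Splits P M) {X : Matrix (Fin k) (Fin m) R}
    {Y : Matrix (Fin m) (Fin n) R} (hX : X ∈ matIn P k m) (hY : Y ∈ matIn P m n) :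
    X * Y ∈ matIn P k n := fun i j => by
  rw [Matrix.mul_apply]
  exact P.sum_mem fun l _ => h.mulP (hX i l) (hY l j)

theorem Splits.mulVec (h : Splits P M) {X : Matrix (Fin k) (Fin m) R}
    {y : Fin m → R} (hX : X ∈ matIn P k m) (hy : y ∈ vecIn P m) :
    X *ᵥ y ∈ vecIn P k := fun i => by
  rw [Matrix.mulVec, dotProduct]
  exact P.sum_mem fun l _ => h.mulP (hX i l) (hy l)

theorem Splits.matStar (h : Splits P M) {X : Matrix (Fin k) (Fin m) R}
    (hX : X ∈ matIn P k m) : Xᴴ ∈ matIn M m k := fun i j => h.starP (hX j i)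

theorem Splits.matZero (h : Splits P M) {X : Matrix (Fin k) (Fin m) R}
    (hX : X ∈ matIn P k m) (hX' : X ∈ matIn M k m) : X = 0 := by
  ext i j
  exact h.disj (hX i j) (hX' i j)

theorem Splits.vecEq (h : Splits P M) {x y : Fin k → R}
    (hx : x - y ∈ vecIn P k) (hx' : x - y ∈ vecIn M k) : x = y := by
  ext i
  exact sub_eq_zero.1 (h.disj (hx i) (hx' i))

/-- `y` is the component in `P` of the vector `x`, up to a remainder in `M`. -/
def IsProj (P M : AddSubgroup R) {n : ℕ} (x y : Fin n → R) : Prop :=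
  y ∈ vecIn P n ∧ x - y ∈ vecIn M n

/-- The twofold inverse problem in the algebra `R`, with data `a, b, c, d` and solution `g`. -/
structure AlgSol (P M : AddSubgroup R) {p q : ℕ} (a : Matrix (Fin p) (Fin p) R)
    (b : Matrix (Fin p) (Fin q) R) (c : Matrix (Fin q) (Fin p) R)
    (d : Matrix (Fin q) (Fin q) R) (g : Matrix (Fin p) (Fin q) R) : Prop where
  split : Splits P M
  ha : a ∈ matIn P p p
  hb : b ∈ matIn P p q
  hc : c ∈ matIn M q p
  hd : d ∈ matIn M q q
  hg : g ∈ matIn P p q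
  h1 : a + g * c ∈ matIn M p p
  h2 : gᴴ + gᴴ * a + c ∈ matIn P q p
  h3 : d + gᴴ * b ∈ matIn P q q
  h4 : g + g * d + b ∈ matIn M p q

variable {p q : ℕ} {a : Matrix (Fin p) (Fin p) R} {b : Matrix (Fin p) (Fin q) R}
  {c : Matrix (Fin q) (Fin p) R} {d : Matrix (Fin q) (Fin q) R} {g : Matrix (Fin p) (Fin q) R}

/-- Reversing the time axis exchanges the two halves of the problem. -/
theorem AlgSol.symm (h : AlgSol P M a b c d g) : AlgSol M P d c b a gᴴ where
  split := h.split.symm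
  ha := h.hd
  hb := h.hc
  hc := h.hb
  hd := h.ha
  hg := h.split.matStar h.hg
  h1 := h.h3
  h2 := by simpa using h.h4
  h3 := by simpa using h.h1
  h4 := h.h2

/-- `α*α - γ*γ = 1` where `α = 1 + a`, `γ = c`: the difference of both sides lies in `M`, and
it is self-adjoint. -/
theorem AlgSol.diag (h : AlgSol P M a b c d g) : (1 + a)ᴴ * (1 + a) - cᴴ * c = 1 := by
  have key : (1 + a)ᴴ * (1 + a) - cᴴ * c - 1 ∈ matIn M p p := by
    have e : (1 + a)ᴴ * (1 + a) - cᴴ * c - 1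
        = aᴴ + (a + g * c) + aᴴ * (a + g * c) - (gᴴ + gᴴ * a + c)ᴴ * c := by
      simp only [conjTranspose_add, conjTranspose_one, conjTranspose_mul,
        conjTranspose_conjTranspose, Matrix.add_mul, Matrix.mul_add, Matrix.one_mul,
        Matrix.mul_one, Matrix.mul_assoc]
      abel
    rw [e]
    have s := h.split
    have ha' := s.matStar h.ha
    exact sub_mem (add_mem (add_mem ha' h.h1) (s.symm.matMul ha' h.h1))
      (s.symm.matMul (s.matStar h.h2) h.hc)
  have key' := h.split.symm.matStar key
  have e : ((1 + a)ᴴ * (1 + a) - cᴴ * c - 1)ᴴ = (1 + a)ᴴ * (1 + a) - cᴴ * c - 1 := by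
    simp only [conjTranspose_sub, conjTranspose_mul, conjTranspose_conjTranspose,
      conjTranspose_one]
  rw [e] at key'
  exact sub_eq_zero.1 (h.split.matZero key' key)

/-- `α*β = γ*δ`: the difference of both sides lies in `M` as well as in `P`. -/
theorem AlgSol.cross (h : AlgSol P M a b c d g) : (1 + a)ᴴ * b - cᴴ * (1 + d) = 0 := by
  have s := h.split
  have ha' := s.matStar h.ha
  have hc' := s.symm.matStar h.hc
  apply s.matZero
  · have e : (1 + a)ᴴ * b - cᴴ * (1 + d)
        = b + (a + g * c)ᴴ * b - cᴴ - cᴴ * (d + gᴴ * b) := by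
      simp only [conjTranspose_add, conjTranspose_one, conjTranspose_mul,
        Matrix.add_mul, Matrix.mul_add, Matrix.one_mul, Matrix.mul_one, Matrix.mul_assoc]
      abel
    rw [e]
    exact sub_mem (sub_mem (add_mem h.hb (s.matMul (s.symm.matStar h.h1) h.hb)) hc')
      (s.matMul hc' h.h3)
  · have e : (1 + a)ᴴ * b - cᴴ * (1 + d)
        = (g + g * d + b) + aᴴ * (g + g * d + b) - (gᴴ + gᴴ * a + c)ᴴ
          - (gᴴ + gᴴ * a + c)ᴴ * d := by
      simp only [conjTranspose_add, conjTranspose_one, conjTranspose_mul,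
        conjTranspose_conjTranspose,
        Matrix.add_mul, Matrix.mul_add, Matrix.one_mul, Matrix.mul_one, Matrix.mul_assoc]
      abel
    rw [e]
    have hv := s.matStar h.h2
    exact sub_mem (sub_mem (add_mem h.h4 (s.symm.matMul ha' h.h4)) hv)
      (s.symm.matMul hv h.hd)

/-- `αα* - ββ* = 1`, `γα* = δβ*` and `αγ* = βδ*`. These are entries of `Q J Q* = J`, which
follows from `Q* J Q = J` because one-sided inverses over a commutative ring are two-sided. -/
theorem AlgSol.dual (h : AlgSol P M a b c d g) :
    (1 + a) * (1 + a)ᴴ - b * bᴴ = 1 ∧ c * (1 + a)ᴴ - (1 + d) * bᴴ = 0 ∧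
      b * (1 + d)ᴴ - (1 + a) * cᴴ = 0 := by
  have h11 := h.diag
  have h22 := h.symm.diag
  have h12 := h.cross
  have h21 := h.symm.cross
  have hQ : fromBlocks (1 + a)ᴴ (-cᴴ) (-bᴴ) (1 + d)ᴴ * fromBlocks (1 + a) b c (1 + d) = 1 := by
    rw [fromBlocks_multiply, ← fromBlocks_one]
    congr 1
    · rw [Matrix.neg_mul, ← sub_eq_add_neg, h11]
    · rw [Matrix.neg_mul, ← sub_eq_add_neg, h12]
    · rw [Matrix.neg_mul, neg_add_eq_sub, h21]
    · rw [Matrix.neg_mul, neg_add_eq_sub, h22]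
  rw [_root_.mul_eq_one_comm, fromBlocks_multiply, ← fromBlocks_one, fromBlocks_inj] at hQ
  obtain ⟨e1, e2, e3, -⟩ := hQ
  refine ⟨?_, ?_, ?_⟩
  · rwa [Matrix.mul_neg, ← sub_eq_add_neg] at e1
  · rwa [Matrix.mul_neg, ← sub_eq_add_neg] at e3
  · rwa [Matrix.mul_neg, neg_add_eq_sub] at e2

/-- With `y₁ = T₊,α* x` and `y₂ = T₊,β* x`, no projection is needed to form `M₁₁x` and `M₂₁x`:
they are `αy₁ - βy₂` and `γy₁ - δy₂`. -/
theorem AlgSol.block (h : AlgSol P M a b c d g) {x y₁ y₂ z₁ z₂ : _}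
    {w₁ w₂ : _}
    (hy₁ : IsProj P M ((1 + a)ᴴ *ᵥ x) y₁) (hy₂ : IsProj P M (bᴴ *ᵥ x) y₂)
    (hz₁ : IsProj P M ((1 + a) *ᵥ y₁) z₁) (hz₂ : IsProj P M (b *ᵥ y₂) z₂)
    (hw₁ : IsProj M P (c *ᵥ y₁) w₁) (hw₂ : IsProj M P (d *ᵥ y₂) w₂) :
    z₁ - z₂ = (1 + a) *ᵥ y₁ - b *ᵥ y₂ ∧ w₁ - w₂ = c *ᵥ y₁ - (1 + d) *ᵥ y₂ := by
  have s := h.split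
  obtain ⟨-, e2, -⟩ := h.dual
  have hα : (1 + a) *ᵥ y₁ ∈ vecIn P p := by
    rw [Matrix.add_mulVec, Matrix.one_mulVec]
    exact add_mem hy₁.1 (s.mulVec h.ha hy₁.1)
  have f1 := s.vecEq (sub_mem hα hz₁.1) hz₁.2
  have f2 := s.vecEq (sub_mem (s.mulVec h.hb hy₂.1) hz₂.1) hz₂.2
  refine ⟨by rw [f1, f2], s.vecEq ?_ ?_⟩
  · have e : w₁ - w₂ - (c *ᵥ y₁ - (1 + d) *ᵥ y₂)
        = (d *ᵥ y₂ - w₂) - (c *ᵥ y₁ - w₁) + y₂ := by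
      rw [Matrix.add_mulVec, Matrix.one_mulVec]; abel
    rw [e]
    exact add_mem (sub_mem hw₂.2 hw₁.2) hy₂.1
  · have e : w₁ - w₂ - (c *ᵥ y₁ - (1 + d) *ᵥ y₂)
        = w₁ - w₂ + c *ᵥ ((1 + a)ᴴ *ᵥ x - y₁)
          - ((bᴴ *ᵥ x - y₂) + d *ᵥ (bᴴ *ᵥ x - y₂)) - (c * (1 + a)ᴴ - (1 + d) * bᴴ) *ᵥ x := by
      simp only [Matrix.add_mulVec, Matrix.one_mulVec, Matrix.mulVec_sub, Matrix.sub_mulVec,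
        ← Matrix.mulVec_mulVec]
      abel
    rw [e, e2, Matrix.zero_mulVec, sub_zero]
    exact sub_mem (add_mem (sub_mem hw₁.1 hw₂.1) (s.symm.mulVec h.hc hy₁.2))
      (add_mem hy₂.2 (s.symm.mulVec h.hd hy₂.2))

/-- The first column of `Ω M = 1`, where `Ω` has the off-diagonal Hankel blocks of `g`, `g*`. -/
theorem AlgSol.right (h : AlgSol P M a b c d g) {x y₁ y₂ h₁ h₂ : _} (hx : x ∈ vecIn P p)
    (hy₁ : IsProj P M ((1 + a)ᴴ *ᵥ x) y₁) (hy₂ : IsProj P M (bᴴ *ᵥ x) y₂)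
    (hh₁ : IsProj P M (g *ᵥ (c *ᵥ y₁ - (1 + d) *ᵥ y₂)) h₁)
    (hh₂ : IsProj M P (gᴴ *ᵥ ((1 + a) *ᵥ y₁ - b *ᵥ y₂)) h₂)
    (hm : c *ᵥ y₁ - (1 + d) *ᵥ y₂ ∈ vecIn M q) :
    (1 + a) *ᵥ y₁ - b *ᵥ y₂ + h₁ = x ∧ c *ᵥ y₁ - (1 + d) *ᵥ y₂ + h₂ = 0 := by
  have s := h.split
  obtain ⟨e1, e2, -⟩ := h.dual
  constructor
  · apply s.vecEq
    · refine sub_mem (add_mem (sub_mem ?_ (s.mulVec h.hb hy₂.1)) hh₁.1) hx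
      rw [Matrix.add_mulVec, Matrix.one_mulVec]
      exact add_mem hy₁.1 (s.mulVec h.ha hy₁.1)
    · have e : (1 + a) *ᵥ y₁ - b *ᵥ y₂ + h₁ - x
          = (g + g * d + b) *ᵥ (bᴴ *ᵥ x - y₂)
            - (((1 + a)ᴴ *ᵥ x - y₁) + (a + g * c) *ᵥ ((1 + a)ᴴ *ᵥ x - y₁))
            - (g *ᵥ (c *ᵥ y₁ - (1 + d) *ᵥ y₂) - h₁)
            + ((1 + a) * (1 + a)ᴴ - b * bᴴ) *ᵥ x - x
            + g *ᵥ ((c * (1 + a)ᴴ - (1 + d) * bᴴ) *ᵥ x) := by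
        simp only [Matrix.add_mulVec, Matrix.one_mulVec, Matrix.mulVec_sub, Matrix.sub_mulVec,
          ← Matrix.mulVec_mulVec, Matrix.mulVec_add]
        abel
      rw [e, e1, e2, Matrix.zero_mulVec, Matrix.mulVec_zero, Matrix.one_mulVec, add_zero,
        add_sub_cancel_right]
      exact sub_mem (sub_mem (s.symm.mulVec h.h4 hy₂.2)
        (add_mem hy₁.2 (s.symm.mulVec h.h1 hy₁.2))) hh₁.2
  · apply s.vecEq
    · have e : c *ᵥ y₁ - (1 + d) *ᵥ y₂ + h₂ - 0
          = (gᴴ + gᴴ * a + c) *ᵥ y₁ - (y₂ + (d + gᴴ * b) *ᵥ y₂)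
            - (gᴴ *ᵥ ((1 + a) *ᵥ y₁ - b *ᵥ y₂) - h₂) := by
        simp only [Matrix.add_mulVec, Matrix.one_mulVec, Matrix.mulVec_sub,
          ← Matrix.mulVec_mulVec, Matrix.mulVec_add]
        abel
      rw [e]
      exact sub_mem (sub_mem (s.mulVec h.h2 hy₁.1)
        (add_mem hy₂.1 (s.mulVec h.h3 hy₂.1))) hh₂.2
    · rw [sub_zero]
      exact add_mem hm hh₂.1

/-- The first column of `M Ω = 1`, with `y = H₋,g* x`. -/
theorem AlgSol.left (h : AlgSol P M a b c d g) {x y₁ y₂ y η₁ η₂ : _} (hx : x ∈ vecIn P p)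
    (hy₁ : IsProj P M ((1 + a)ᴴ *ᵥ x) y₁) (hy₂ : IsProj P M (bᴴ *ᵥ x) y₂)
    (hy : IsProj M P (gᴴ *ᵥ x) y)
    (hη₁ : IsProj M P ((1 + d)ᴴ *ᵥ y) η₁) (hη₂ : IsProj M P (cᴴ *ᵥ y) η₂) :
    ((1 + a) *ᵥ y₁ - b *ᵥ y₂) + (b *ᵥ η₁ - (1 + a) *ᵥ η₂) = x ∧
      (c *ᵥ y₁ - (1 + d) *ᵥ y₂) + ((1 + d) *ᵥ η₁ - c *ᵥ η₂) = 0 := by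
  have s := h.split
  obtain ⟨e1, e2, -⟩ := h.dual
  have hc' := s.symm.matStar h.hc
  have hd' := s.symm.matStar h.hd
  have k1 : (1 + a)ᴴ *ᵥ x = y₁ - η₂ := by
    apply s.vecEq
    · have e : (1 + a)ᴴ *ᵥ x - (y₁ - η₂)
          = x + (a + g * c)ᴴ *ᵥ x - cᴴ *ᵥ (gᴴ *ᵥ x - y) - y₁ - (cᴴ *ᵥ y - η₂) := by
        simp only [conjTranspose_add, conjTranspose_one, conjTranspose_mul, Matrix.add_mulVec,
          Matrix.one_mulVec, Matrix.mulVec_sub, ← Matrix.mulVec_mulVec]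
        abel
      rw [e]
      exact sub_mem (sub_mem (sub_mem (add_mem hx (s.mulVec (s.symm.matStar h.h1) hx))
        (s.mulVec hc' hy.2)) hy₁.1) hη₂.2
    · have e : (1 + a)ᴴ *ᵥ x - (y₁ - η₂) = ((1 + a)ᴴ *ᵥ x - y₁) + η₂ := by abel
      rw [e]
      exact add_mem hy₁.2 hη₂.1
  have k2 : bᴴ *ᵥ x = y₂ - η₁ := by
    apply s.vecEq
    · have e : bᴴ *ᵥ x - (y₂ - η₁)
          = (g + g * d + b)ᴴ *ᵥ x - ((gᴴ *ᵥ x - y) + dᴴ *ᵥ (gᴴ *ᵥ x - y)) - y₂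
            - ((1 + d)ᴴ *ᵥ y - η₁) := by
        simp only [conjTranspose_add, conjTranspose_one, conjTranspose_mul, Matrix.add_mulVec,
          Matrix.one_mulVec, Matrix.mulVec_sub, ← Matrix.mulVec_mulVec]
        abel
      rw [e]
      exact sub_mem (sub_mem (sub_mem (s.mulVec (s.symm.matStar h.h4) hx)
        (add_mem hy.2 (s.mulVec hd' hy.2))) hy₂.1) hη₁.2
    · have e : bᴴ *ᵥ x - (y₂ - η₁) = (bᴴ *ᵥ x - y₂) + η₁ := by abel
      rw [e]
      exact add_mem hy₂.2 hη₁.1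
  constructor
  · have e : ((1 + a) *ᵥ y₁ - b *ᵥ y₂) + (b *ᵥ η₁ - (1 + a) *ᵥ η₂)
        = (1 + a) *ᵥ (y₁ - η₂) - b *ᵥ (y₂ - η₁) := by
      simp only [Matrix.mulVec_sub]; abel
    rw [e, ← k1, ← k2, Matrix.mulVec_mulVec, Matrix.mulVec_mulVec, ← Matrix.sub_mulVec, e1,
      Matrix.one_mulVec]
  · have e : (c *ᵥ y₁ - (1 + d) *ᵥ y₂) + ((1 + d) *ᵥ η₁ - c *ᵥ η₂)
        = c *ᵥ (y₁ - η₂) - (1 + d) *ᵥ (y₂ - η₁) := by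
      simp only [Matrix.mulVec_sub]; abel
    rw [e, ← k1, ← k2, Matrix.mulVec_mulVec, Matrix.mulVec_mulVec, ← Matrix.sub_mulVec, e2,
      Matrix.zero_mulVec]

/-- `M₁₁ g = -b`, column by column: the projections in question are `T₊,α* g = -γ*` and
`T₊,β* g = -d*`. -/
theorem AlgSol.column (h : AlgSol P M a b c d g) (j : Fin q) {y₁ y₂ : _}
    (hy₁ : IsProj P M ((1 + a)ᴴ *ᵥ g.col j) y₁) (hy₂ : IsProj P M (bᴴ *ᵥ g.col j) y₂) :
    (1 + a) *ᵥ y₁ - b *ᵥ y₂ = -b.col j := by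
  have s := h.split
  obtain ⟨-, -, e3⟩ := h.dual
  have hc' := s.symm.matStar h.hc
  have hd' := s.symm.matStar h.hd
  have hv := s.matStar h.h2
  have hz := s.matStar h.h3
  have colMul : ∀ {k l : ℕ} (X : Matrix (Fin k) (Fin l) R) (Y : Matrix (Fin l) (Fin q) R),
      X *ᵥ Y.col j = (X * Y).col j := fun X Y => rfl
  have k1 : y₁ = -(cᴴ.col j) := by
    apply s.vecEq
    · exact sub_mem hy₁.1 (neg_mem fun i => hc' i j)
    · have e : y₁ - -(cᴴ.col j)
          = (gᴴ + gᴴ * a + c)ᴴ.col j - ((1 + a)ᴴ *ᵥ g.col j - y₁) := by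
        rw [colMul]
        ext i
        simp [Matrix.add_mul]
        abel
      rw [e]
      exact sub_mem (fun i => hv i j) hy₁.2
  have k2 : y₂ = -(dᴴ.col j) := by
    apply s.vecEq
    · exact sub_mem hy₂.1 (neg_mem fun i => hd' i j)
    · have e : y₂ - -(dᴴ.col j)
          = (d + gᴴ * b)ᴴ.col j - (bᴴ *ᵥ g.col j - y₂) := by
        rw [colMul]
        ext i
        simp only [Pi.sub_apply, Pi.neg_apply, Matrix.col_apply, conjTranspose_add,
          conjTranspose_mul, conjTranspose_conjTranspose, Matrix.add_apply]
        abel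
      rw [e]
      exact sub_mem (fun i => hz i j) hy₂.2
  have e3' : (1 + a) * cᴴ = b + b * dᴴ := by
    rw [← sub_eq_zero.1 e3]
    simp [Matrix.mul_add]
  rw [k1, k2, Matrix.mulVec_neg, Matrix.mulVec_neg, colMul, colMul, e3']
  ext i
  simp

end Algebra

/-! ### The Fourier image of the integrable functions on a half-line -/

section Analysis

open scoped FourierTransform Convolution ContDiff

/-- An integrable function with vanishing Fourier transform is zero almost everywhere: its
pairing with a test function `φ = 𝓕 ψ` equals the pairing of `𝓕 f = 0` with `ψ`. -/
theorem ae_zero_of_fourier {f : ℝ → ℂ} (hf : Integrable f) (h : 𝓕 f = 0) : f =ᵐ[volume] 0 := by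
  refine ae_eq_zero_of_integral_contDiff_smul_eq_zero hf.locallyIntegrable ?_
  intro φ hφ hφc
  have h₁ : HasCompactSupport (Complex.ofRealCLM ∘ φ) := hφc.comp_left rfl
  have h₂ : ContDiff ℝ ∞ (Complex.ofRealCLM ∘ φ) := by fun_prop
  let Φ : SchwartzMap ℝ ℂ := h₁.toSchwartzMap h₂
  have e := VectorFourier.integral_fourierIntegral_smul_eq_flip (L := innerₗ ℝ) (μ := volume)
    (ν := volume) Real.continuous_fourierChar continuous_inner hf (𝓕⁻ Φ).integrable
  have e1 : VectorFourier.fourierIntegral Real.fourierChar volume (innerₗ ℝ) f = 0 := h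
  have e2 : VectorFourier.fourierIntegral Real.fourierChar volume (innerₗ ℝ).flip
      (𝓕⁻ Φ : SchwartzMap ℝ ℂ) = Φ := by
    rw [flip_innerₗ]
    change 𝓕 ((𝓕⁻ Φ : SchwartzMap ℝ ℂ) : ℝ → ℂ) = Φ
    rw [← SchwartzMap.fourier_coe, FourierTransform.fourier_fourierInv_eq]
  rw [e1, e2] at e
  simp only [Pi.zero_apply, zero_smul, integral_zero] at e
  rw [e]
  refine integral_congr_ae (.of_forall fun x => ?_)
  change (φ x : ℝ) • f x = f x • ((φ x : ℝ) : ℂ)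
  rw [Complex.real_smul, smul_eq_mul, mul_comm]

theorem ft_add {f h : ℝ → ℂ} (hf : Integrable f) (hh : Integrable h) :
    𝓕 (fun t => f t + h t) = 𝓕 f + 𝓕 h := by
  ext ξ
  simp only [Pi.add_apply, Real.fourier_eq, smul_add]
  exact integral_add ((Real.fourierIntegral_convergent_iff ξ).2 hf)
    ((Real.fourierIntegral_convergent_iff ξ).2 hh)

theorem ft_neg {f : ℝ → ℂ} : 𝓕 (fun t => -f t) = -𝓕 f := by
  ext ξ
  simp only [Pi.neg_apply, Real.fourier_real_eq, smul_neg, integral_neg]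

theorem ft_sub {f h : ℝ → ℂ} (hf : Integrable f) (hh : Integrable h) :
    𝓕 (fun t => f t - h t) = 𝓕 f - 𝓕 h := by
  simp only [sub_eq_add_neg]
  rw [← ft_neg]
  exact ft_add hf hh.neg

theorem ft_zero : 𝓕 (fun _ : ℝ => (0 : ℂ)) = 0 := by
  ext ξ
  simp [Real.fourier_real_eq]

theorem ft_sum {ι : Type*} (s : Finset ι) {f : ι → ℝ → ℂ} (hf : ∀ i, Integrable (f i)) :
    𝓕 (fun t => ∑ i ∈ s, f i t) = ∑ i ∈ s, 𝓕 (f i) := by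
  ext ξ
  simp only [Finset.sum_apply, Real.fourier_real_eq, Finset.smul_sum]
  refine integral_finsetSum s fun i _ => ?_
  simpa [mul_comm] using (Real.fourierIntegral_convergent_iff ξ).2 (hf i)

theorem ft_congr {f h : ℝ → ℂ} (e : f =ᵐ[volume] h) : 𝓕 f = 𝓕 h := by
  ext ξ
  simp only [Real.fourier_real_eq]
  refine integral_congr_ae ?_
  filter_upwards [e] with t ht
  rw [ht]

theorem fourier_star {f : ℝ → ℂ} : 𝓕 (fun t => star (f (-t))) = star (𝓕 f) := by
  ext ξ
  rw [Pi.star_apply, Real.fourier_real_eq, Real.fourier_real_eq,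
    ← integral_neg_eq_self (fun v => Real.fourierChar (-(v * ξ)) • star (f (-v)))]
  refine Eq.trans (integral_congr_ae (.of_forall fun v => ?_)) integral_conj
  have h2 : (starRingEnd ℂ) 2 = 2 := Complex.conj_ofNat 2
  simp [Circle.smul_def, Real.fourierChar_apply, ← Complex.exp_conj, h2]

/-- The transforms of the integrable functions vanishing almost everywhere off `S`. -/
def half (S : Set ℝ) : AddSubgroup (ℝ → ℂ) where
  carrier := {x | ∃ f : ℝ → ℂ, Integrable f ∧ (∀ᵐ t, t ∉ S → f t = 0) ∧ x = 𝓕 f}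
  zero_mem' := ⟨fun _ => 0, integrable_zero _ _ _, by simp, ft_zero.symm⟩
  add_mem' := by
    rintro _ _ ⟨f, hf, hf0, rfl⟩ ⟨h, hh, hh0, rfl⟩
    refine ⟨fun t => f t + h t, hf.add hh, ?_, (ft_add hf hh).symm⟩
    filter_upwards [hf0, hh0] with t h1 h2 ht
    rw [h1 ht, h2 ht, add_zero]
  neg_mem' := by
    rintro _ ⟨f, hf, hf0, rfl⟩
    refine ⟨fun t => -f t, hf.neg, ?_, ft_neg.symm⟩
    filter_upwards [hf0] with t h1 ht
    rw [h1 ht, neg_zero]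

theorem half_mul {S : Set ℝ} (hS : ∀ s t, s ∈ S → t ∈ S → s + t ∈ S) {x y : ℝ → ℂ}
    (hx : x ∈ half S) (hy : y ∈ half S) : x * y ∈ half S := by
  obtain ⟨f, hf, hf0, rfl⟩ := hx
  obtain ⟨h, hh, hh0, rfl⟩ := hy
  refine ⟨f ⋆[ContinuousLinearMap.mul ℂ ℂ] h, hf.integrable_convolution _ hh, ?_, ?_⟩
  · refine .of_forall fun t ht => ?_
    rw [convolution_def]
    refine integral_eq_zero_of_ae ?_
    have hh0' : ∀ᵐ s, t - s ∉ S → h (t - s) = 0 :=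
      (Measure.measurePreserving_sub_left volume t).quasiMeasurePreserving.ae hh0
    filter_upwards [hf0, hh0'] with s h1 h2
    by_cases hs : s ∈ S
    · have : t - s ∉ S := fun h' => ht (by simpa using hS _ _ hs h')
      simp [h2 this]
    · simp [h1 hs]
  · ext ξ
    exact (Real.fourier_mul_convolution_eq hf hh ξ).symm

theorem half_star {S T : Set ℝ} (hST : ∀ t, -t ∈ S → t ∈ T) {x : ℝ → ℂ} (hx : x ∈ half S) :
    star x ∈ half T := by
  obtain ⟨f, hf, hf0, rfl⟩ := hx
  refine ⟨fun t => star (f (-t)), ?_, ?_, fourier_star.symm⟩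
  · exact (starL' ℝ : ℂ ≃L[ℝ] ℂ).toContinuousLinearMap.integrable_comp hf.comp_neg
  · have hf0' : ∀ᵐ t, -t ∉ S → f (-t) = 0 :=
      (Measure.measurePreserving_neg (volume : Measure ℝ)).quasiMeasurePreserving.ae hf0
    filter_upwards [hf0'] with t h1 ht
    rw [h1 fun h => ht (hST t h), star_zero]

/-- The two half-line algebras meet only in zero because the Fourier transform is injective and
`{0}` is a null set. -/
theorem half_splits : Splits (half (Ici 0)) (half (Iic 0)) where
  mulP := half_mul fun _ _ hs ht => add_nonneg (mem_Ici.1 hs) ht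
  mulM := half_mul fun _ _ hs ht => add_nonpos (mem_Iic.1 hs) ht
  starP := half_star fun t ht => by simpa using ht
  starM := half_star fun t ht => by simpa using ht
  disj := by
    rintro _ ⟨f, hf, hf0, rfl⟩ ⟨h, hh, hh0, e⟩
    have e0 : 𝓕 (fun t => f t - h t) = 0 := by rw [ft_sub hf hh, e, sub_self]
    have := ae_zero_of_fourier (hf.sub hh) e0
    rw [← ft_zero]
    refine ft_congr ?_
    filter_upwards [this, hf0, hh0, Measure.ae_ne volume 0] with t h1 h2 h3 h4
    rcases lt_or_gt_of_ne h4 with h5 | h5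
    · exact h2 (by simpa using h5)
    · rw [sub_eq_zero.1 h1]
      exact h3 (by simpa using h5)

/-- The entrywise Fourier transform of a matrix function. -/
def matHat {k m : ℕ} (f : MatF k m) : Matrix (Fin k) (Fin m) (ℝ → ℂ) :=
  Matrix.of fun i j => 𝓕 (fun t => f t i j)

/-- The Fourier transform of a vector function on `S`, extended by zero to the line. -/
def vecHat (S : Set ℝ) {n : ℕ} (f : ℝ → Fin n → ℂ) : Fin n → ℝ → ℂ :=
  fun i => 𝓕 (S.indicator fun t => f t i)

theorem matHat_adjF {k m : ℕ} (f : MatF k m) : matHat (adjF f) = (matHat f)ᴴ := by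
  refine Matrix.ext fun i j => ?_
  exact fourier_star (f := fun t => f t j i)

theorem integrable_adjF {k m : ℕ} {f : MatF k m} (hf : ∀ i j, Integrable fun t => f t i j)
    (i : Fin m) (j : Fin k) : Integrable fun t => adjF f t i j :=
  (starL' ℝ : ℂ ≃L[ℝ] ℂ).toContinuousLinearMap.integrable_comp (hf j i).comp_neg

/-- For almost every `t` all the convolution integrals converge, so they may be summed under the
integral sign. -/
theorem ae_sum_convolution {ι : Type*} [Fintype ι] {f h : ι → ℝ → ℂ} (hf : ∀ l, Integrable (f l))
    (hh : ∀ l, Integrable (h l)) :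
    ∀ᵐ t, (∀ l, Integrable fun s => f l (t - s) * h l s) ∧
      ∫ s, ∑ l, f l (t - s) * h l s
        = ∑ l, (f l ⋆[ContinuousLinearMap.mul ℂ ℂ] h l) t := by
  have : ∀ᵐ t, ∀ l, ConvolutionExistsAt (f l) (h l) t (ContinuousLinearMap.mul ℂ ℂ) volume :=
    ae_all_iff.2 fun l => (hf l).ae_convolution_exists _ (hh l)
  filter_upwards [this] with t ht
  have hi : ∀ l, Integrable fun s => f l (t - s) * h l s := fun l => (ht l).integrable_swap
  refine ⟨hi, ?_⟩
  rw [integral_finsetSum _ fun l _ => hi l]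
  exact Finset.sum_congr rfl fun l _ => convolution_mul_swap.symm

theorem fourier_sum_convolution {ι : Type*} [Fintype ι] {f h : ι → ℝ → ℂ}
    (hf : ∀ l, Integrable (f l)) (hh : ∀ l, Integrable (h l)) :
    𝓕 (fun t => ∑ l, (f l ⋆[ContinuousLinearMap.mul ℂ ℂ] h l) t) = ∑ l, 𝓕 (f l) * 𝓕 (h l) := by
  rw [ft_sum _ fun l => (hf l).integrable_convolution _ (hh l)]
  refine Finset.sum_congr rfl fun l _ => ?_
  ext ξ
  exact Real.fourier_mul_convolution_eq (hf l) (hh l) ξ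

theorem integrable_sum_convolution {ι : Type*} [Fintype ι] {f h : ι → ℝ → ℂ}
    (hf : ∀ l, Integrable (f l)) (hh : ∀ l, Integrable (h l)) :
    Integrable (fun t => ∑ l, (f l ⋆[ContinuousLinearMap.mul ℂ ℂ] h l) t) :=
  integrable_finsetSum _ fun l _ => (hf l).integrable_convolution _ (hh l)

theorem conv_ae {k m n : ℕ} {f : MatF k m} {h : MatF m n}
    (hf : ∀ i j, Integrable fun t => f t i j) (hh : ∀ i j, Integrable fun t => h t i j)
    (i : Fin k) (j : Fin n) : (fun t => conv f h t i j) =ᵐ[volume]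
      fun t => ∑ l, ((fun s => f s i l) ⋆[ContinuousLinearMap.mul ℂ ℂ] fun s => h s l j) t := by
  filter_upwards [ae_sum_convolution (hf i) fun l => hh l j] with t ht
  rw [← ht.2]
  simp only [conv, Matrix.of_apply, Matrix.mul_apply]

theorem integrable_conv {k m n : ℕ} {f : MatF k m} {h : MatF m n}
    (hf : ∀ i j, Integrable fun t => f t i j) (hh : ∀ i j, Integrable fun t => h t i j)
    (i : Fin k) (j : Fin n) : Integrable fun t => conv f h t i j :=
  (integrable_sum_convolution (hf i) fun l => hh l j).congr (conv_ae hf hh i j).symm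

theorem matHat_conv {k m n : ℕ} {f : MatF k m} {h : MatF m n}
    (hf : ∀ i j, Integrable fun t => f t i j) (hh : ∀ i j, Integrable fun t => h t i j) :
    matHat (conv f h) = matHat f * matHat h := by
  refine Matrix.ext fun i j => ?_
  rw [Matrix.mul_apply]
  exact (ft_congr (conv_ae hf hh i j)).trans
    (fourier_sum_convolution (hf i) fun l => hh l j)

theorem matHat_add {k m : ℕ} {f h : MatF k m}
    (hf : ∀ i j, Integrable fun t => f t i j) (hh : ∀ i j, Integrable fun t => h t i j) :
    matHat (fun t => f t + h t) = matHat f + matHat h := by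
  refine Matrix.ext fun i j => ?_
  exact ft_add (hf i j) (hh i j)

theorem matHat_mem {S : Set ℝ} {k m : ℕ} {f : MatF k m}
    (hf : ∀ i j, Integrable fun t => f t i j) (h0 : ∀ᵐ t, t ∉ S → f t = 0) :
    matHat f ∈ matIn (half S) k m := fun i j => by
  refine ⟨_, hf i j, ?_, rfl⟩
  filter_upwards [h0] with t h1 ht
  rw [h1 ht, Matrix.zero_apply]

theorem integrable_indicator_Lp {S : Set ℝ} (hS : MeasurableSet S) {n : ℕ}
    (f : Lp (Fin n → ℂ) 1 (volume.restrict S)) (i : Fin n) :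
    Integrable (S.indicator fun t => f t i) :=
  (integrable_indicator_iff hS).2 ((L1.integrable_coeFn f).eval i)

theorem vecHat_mem {S : Set ℝ} (hS : MeasurableSet S) {n : ℕ}
    (f : Lp (Fin n → ℂ) 1 (volume.restrict S)) : vecHat S f ∈ vecIn (half S) n := fun i =>
  ⟨_, integrable_indicator_Lp hS f i, .of_forall fun _ ht => indicator_of_notMem ht _, rfl⟩

theorem vecHat_congr {S : Set ℝ} (hS : MeasurableSet S) {n : ℕ} {f h : ℝ → Fin n → ℂ}
    (e : f =ᵐ[volume.restrict S] h) : vecHat S f = vecHat S h := by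
  ext1 i
  refine ft_congr ?_
  filter_upwards [(ae_restrict_iff' hS).1 e] with t ht
  by_cases h' : t ∈ S
  · rw [indicator_of_mem h', indicator_of_mem h', ht h']
  · rw [indicator_of_notMem h', indicator_of_notMem h']

theorem vecHat_add {S : Set ℝ} (hS : MeasurableSet S) {n : ℕ}
    (f h : Lp (Fin n → ℂ) 1 (volume.restrict S)) :
    vecHat S ⇑(f + h) = vecHat S f + vecHat S h := by
  rw [vecHat_congr hS (Lp.coeFn_add f h)]
  ext1 i
  rw [Pi.add_apply, vecHat, vecHat, vecHat,
    ← ft_add (integrable_indicator_Lp hS f i) (integrable_indicator_Lp hS h i)]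
  congr 1
  exact indicator_add S _ _

theorem vecHat_neg {S : Set ℝ} (hS : MeasurableSet S) {n : ℕ}
    (f : Lp (Fin n → ℂ) 1 (volume.restrict S)) :
    vecHat S ⇑(-f) = -vecHat S f := by
  rw [vecHat_congr hS (Lp.coeFn_neg f)]
  ext1 i
  rw [Pi.neg_apply, vecHat, vecHat, ← ft_neg]
  congr 1
  exact indicator_neg S _

theorem vecHat_sub {S : Set ℝ} (hS : MeasurableSet S) {n : ℕ}
    (f h : Lp (Fin n → ℂ) 1 (volume.restrict S)) :
    vecHat S ⇑(f - h) = vecHat S f - vecHat S h := by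
  rw [sub_eq_add_neg, sub_eq_add_neg, vecHat_add hS, vecHat_neg hS]

theorem vecHat_inj {S : Set ℝ} (hS : MeasurableSet S) {n : ℕ}
    {f h : Lp (Fin n → ℂ) 1 (volume.restrict S)} (e : vecHat S f = vecHat S h) : f = h := by
  have key : ∀ i, ∀ᵐ t, t ∈ S → f t i = h t i := fun i => by
    have hf := integrable_indicator_Lp hS f i
    have hh := integrable_indicator_Lp hS h i
    have e0 : 𝓕 (fun t => S.indicator (fun t => f t i) t - S.indicator (fun t => h t i) t) = 0 := by
      rw [ft_sub hf hh]
      exact sub_eq_zero.2 (congrFun e i)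
    filter_upwards [ae_zero_of_fourier (hf.sub hh) e0] with t ht hS'
    rw [Pi.sub_apply, indicator_of_mem hS', indicator_of_mem hS'] at ht
    exact sub_eq_zero.1 ht
  refine Lp.ext ((ae_restrict_iff' hS).2 ?_)
  filter_upwards [ae_all_iff.2 key] with t ht hS'
  ext i
  exact ht i hS'

/-- On the Fourier side, an operator `f ↦ v + ∫_S r(t - s) f(s) ds`, restricted to `S'`, is
multiplication by the transform of `r` followed by the projection with remainder carried by `T`. -/
theorem isProj_kernel {S S' T : Set ℝ} (hS : MeasurableSet S) (hS' : MeasurableSet S')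
    (hT : S' ∪ T = univ) {k m : ℕ} {r : MatF k m} (hr : ∀ i j, Integrable fun t => r t i j)
    (f : Lp (Fin m → ℂ) 1 (volume.restrict S)) (u : Lp (Fin k → ℂ) 1 (volume.restrict S'))
    (v : ℝ → Fin k → ℂ) (hv : ∀ i, Integrable fun t => v t i)
    (hu : u =ᵐ[volume.restrict S'] fun t => v t +
      ∫ s, (r (t - s)).mulVec (f s) ∂(volume.restrict S)) :
    IsProj (half S') (half T) ((fun i => 𝓕 fun t => v t i) + matHat r *ᵥ vecHat S f)
      (vecHat S' u) := by
  refine ⟨vecHat_mem hS' u, fun i => ?_⟩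
  have hfi := integrable_indicator_Lp hS f
  have hui := integrable_indicator_Lp hS' u i
  have hG := integrable_sum_convolution (hr i) hfi
  refine ⟨fun t => (v t i + ∑ l, ((fun s => r s i l) ⋆[ContinuousLinearMap.mul ℂ ℂ]
    S.indicator fun t => f t l) t) - S'.indicator (fun t => u t i) t,
    ((hv i).add hG).sub hui, ?_, ?_⟩
  · filter_upwards [(ae_restrict_iff' hS').1 hu,
      ae_all_iff.2 fun i => ae_sum_convolution (hr i) hfi] with t h1 h2 ht
    have htS : t ∈ S' := by
      have : t ∈ S' ∪ T := hT ▸ mem_univ t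
      exact this.resolve_right ht
    rw [indicator_of_mem htS, h1 htS, Pi.add_apply, ← (h2 i).2, sub_eq_zero]
    congr 1
    have hind : ∀ i l s, r (t - s) i l * S.indicator (fun t => f t l) s
        = S.indicator (fun s => r (t - s) i l * f s l) s := fun i l s => by
      by_cases hs : s ∈ S
      · rw [indicator_of_mem hs, indicator_of_mem hs]
      · rw [indicator_of_notMem hs, indicator_of_notMem hs, mul_zero]
    have hint : ∀ i l, Integrable (fun s => r (t - s) i l * f s l) (volume.restrict S) :=
      fun i l => by
        refine (integrable_indicator_iff hS).1 (((h2 i).1 l).congr (.of_forall fun s => ?_))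
        exact hind i l s
    rw [eval_integral fun i => ?_]
    · simp only [hind, Matrix.mulVec, dotProduct]
      rw [← integral_indicator hS]
      refine integral_congr_ae (.of_forall fun s => ?_)
      by_cases hs : s ∈ S
      · simp [hs]
      · simp [hs]
    · simp only [Matrix.mulVec, dotProduct]
      exact integrable_finsetSum _ fun l _ => hint i l
  · refine Eq.symm ((ft_sub ((hv i).add hG) hui).trans ?_)
    refine congrArg₂ (· - ·) ((ft_add (hv i) hG).trans ?_) rfl
    rw [fourier_sum_convolution (hr i) hfi]
    rfl

/-- The Hankel case of `isProj_kernel`, and with `S' = S` the Wiener–Hopf case without constant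
term. -/
theorem isProj_hankel {S S' T : Set ℝ} (hS : MeasurableSet S) (hS' : MeasurableSet S')
    (hT : S' ∪ T = univ) {k m : ℕ} {r : MatF k m} (hr : ∀ i j, Integrable fun t => r t i j)
    (f : Lp (Fin m → ℂ) 1 (volume.restrict S)) (u : Lp (Fin k → ℂ) 1 (volume.restrict S'))
    (hu : u =ᵐ[volume.restrict S'] fun t =>
      ∫ s, (r (t - s)).mulVec (f s) ∂(volume.restrict S)) :
    IsProj (half S') (half T) (matHat r *ᵥ vecHat S f) (vecHat S' u) := by
  have := isProj_kernel hS hS' hT hr f u (fun _ _ => 0) (fun _ => integrable_zero _ _ _)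
    (hu.trans (.of_forall fun t => (zero_add _).symm))
  have e : (fun _ => 𝓕 (fun _ : ℝ => (0 : ℂ)) : Fin k → ℝ → ℂ) = 0 := by
    ext1 i
    exact ft_zero
  rwa [e, zero_add] at this

theorem isProj_one {S T : Set ℝ} (hS : MeasurableSet S)
    (hT : S ∪ T = univ) {m : ℕ} {r : MatF m m} (hr : ∀ i j, Integrable fun t => r t i j)
    (f u : Lp (Fin m → ℂ) 1 (volume.restrict S))
    (hu : u =ᵐ[volume.restrict S] fun t => (1 : Matrix (Fin m) (Fin m) ℂ).mulVec (f t) +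
      ∫ s, (r (t - s)).mulVec (f s) ∂(volume.restrict S)) :
    IsProj (half S) (half T) ((1 + matHat r) *ᵥ vecHat S f) (vecHat S u) := by
  have := isProj_kernel hS hS hT hr f u (fun t i => S.indicator (fun t => f t i) t)
    (integrable_indicator_Lp hS f) (hu.trans ?_)
  · rw [Matrix.add_mulVec, Matrix.one_mulVec]
    exact this
  · refine (ae_restrict_iff' hS).2 (.of_forall fun t ht => ?_)
    simp [ht]

theorem isProj_zero {S T : Set ℝ} (hS : MeasurableSet S)
    (hT : S ∪ T = univ) {k m : ℕ} {r : MatF k m} (hr : ∀ i j, Integrable fun t => r t i j)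
    (f : Lp (Fin m → ℂ) 1 (volume.restrict S)) (u : Lp (Fin k → ℂ) 1 (volume.restrict S))
    (hu : u =ᵐ[volume.restrict S] fun t => (0 : Matrix (Fin k) (Fin m) ℂ).mulVec (f t) +
      ∫ s, (r (t - s)).mulVec (f s) ∂(volume.restrict S)) :
    IsProj (half S) (half T) (matHat r *ᵥ vecHat S f) (vecHat S u) := by
  refine isProj_hankel hS hS hT hr f u (hu.trans (.of_forall fun t => ?_))
  simp

theorem vecHat_col {S : Set ℝ} (hS : MeasurableSet S) {k m : ℕ} {r : MatF k m}
    (hr : ∀ t ∉ S, r t = 0) (j : Fin m) {f : ℝ → Fin k → ℂ}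
    (hf : f =ᵐ[volume.restrict S] colF r j) : vecHat S f = (matHat r).col j := by
  rw [vecHat_congr hS hf]
  ext1 i
  refine congrArg 𝓕 (indicator_eq_self.2 fun t ht => ?_)
  by_contra hS'
  exact ht (by simp [colF, hr t hS'])

/-! ### Operator identities -/

/-- The operators `T_α`, `T_α*`, `T_β`, `T_β*`, `H_γ`, `H_δ` (acting on functions on `S`) and `H_g`
(from functions on `S'` to functions on `S`), described on the Fourier side as multiplications
followed by projections; `S` and `S'` stand for opposite half-lines. Since the constant term of a
symbol does not affect its Hankel operator, `H_δ` is described by `d` in place of `1 + d`. -/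
structure HalfOps (S S' : Set ℝ) {p q : ℕ} (a : Matrix (Fin p) (Fin p) (ℝ → ℂ))
    (b : Matrix (Fin p) (Fin q) (ℝ → ℂ)) (c : Matrix (Fin q) (Fin p) (ℝ → ℂ))
    (d : Matrix (Fin q) (Fin q) (ℝ → ℂ)) (g : Matrix (Fin p) (Fin q) (ℝ → ℂ))
    (Tα Tαs : Lp (Fin p → ℂ) 1 (volume.restrict S) → Lp (Fin p → ℂ) 1 (volume.restrict S))
    (Tβ : Lp (Fin q → ℂ) 1 (volume.restrict S) → Lp (Fin p → ℂ) 1 (volume.restrict S))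
    (Tβs : Lp (Fin p → ℂ) 1 (volume.restrict S) → Lp (Fin q → ℂ) 1 (volume.restrict S))
    (Hγ : Lp (Fin p → ℂ) 1 (volume.restrict S) → Lp (Fin q → ℂ) 1 (volume.restrict S'))
    (Hδ : Lp (Fin q → ℂ) 1 (volume.restrict S) → Lp (Fin q → ℂ) 1 (volume.restrict S'))
    (Hg : Lp (Fin q → ℂ) 1 (volume.restrict S') → Lp (Fin p → ℂ) 1 (volume.restrict S)) :
    Prop where
  tα : ∀ f : Lp (Fin p → ℂ) 1 (volume.restrict S),
    IsProj (half S) (half S') ((1 + a) *ᵥ vecHat S f) (vecHat S (Tα f))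
  tαs : ∀ f : Lp (Fin p → ℂ) 1 (volume.restrict S),
    IsProj (half S) (half S') ((1 + a)ᴴ *ᵥ vecHat S f) (vecHat S (Tαs f))
  tβ : ∀ f : Lp (Fin q → ℂ) 1 (volume.restrict S),
    IsProj (half S) (half S') (b *ᵥ vecHat S f) (vecHat S (Tβ f))
  tβs : ∀ f : Lp (Fin p → ℂ) 1 (volume.restrict S),
    IsProj (half S) (half S') (bᴴ *ᵥ vecHat S f) (vecHat S (Tβs f))
  hγ : ∀ f : Lp (Fin p → ℂ) 1 (volume.restrict S),
    IsProj (half S') (half S) (c *ᵥ vecHat S f) (vecHat S' (Hγ f))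
  hδ : ∀ f : Lp (Fin q → ℂ) 1 (volume.restrict S),
    IsProj (half S') (half S) (d *ᵥ vecHat S f) (vecHat S' (Hδ f))
  hg : ∀ f : Lp (Fin q → ℂ) 1 (volume.restrict S'),
    IsProj (half S) (half S') (g *ᵥ vecHat S' f) (vecHat S (Hg f))

section Operators

variable {S S' : Set ℝ} {p q : ℕ} {a : Matrix (Fin p) (Fin p) (ℝ → ℂ)}
    {b : Matrix (Fin p) (Fin q) (ℝ → ℂ)} {c : Matrix (Fin q) (Fin p) (ℝ → ℂ)}
    {d : Matrix (Fin q) (Fin q) (ℝ → ℂ)} {g : Matrix (Fin p) (Fin q) (ℝ → ℂ)}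
    {Tα Tαs : Lp (Fin p → ℂ) 1 (volume.restrict S) → Lp (Fin p → ℂ) 1 (volume.restrict S)}
    {Tβ : Lp (Fin q → ℂ) 1 (volume.restrict S) → Lp (Fin p → ℂ) 1 (volume.restrict S)}
    {Tβs : Lp (Fin p → ℂ) 1 (volume.restrict S) → Lp (Fin q → ℂ) 1 (volume.restrict S)}
    {Hγ : Lp (Fin p → ℂ) 1 (volume.restrict S) → Lp (Fin q → ℂ) 1 (volume.restrict S')}
    {Hδ : Lp (Fin q → ℂ) 1 (volume.restrict S) → Lp (Fin q → ℂ) 1 (volume.restrict S')}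
    {Hg : Lp (Fin q → ℂ) 1 (volume.restrict S') → Lp (Fin p → ℂ) 1 (volume.restrict S)}
    {Tδ Tδs : Lp (Fin q → ℂ) 1 (volume.restrict S') → Lp (Fin q → ℂ) 1 (volume.restrict S')}
    {Tγ : Lp (Fin p → ℂ) 1 (volume.restrict S') → Lp (Fin q → ℂ) 1 (volume.restrict S')}
    {Tγs : Lp (Fin q → ℂ) 1 (volume.restrict S') → Lp (Fin p → ℂ) 1 (volume.restrict S')}
    {Hβ : Lp (Fin q → ℂ) 1 (volume.restrict S') → Lp (Fin p → ℂ) 1 (volume.restrict S)}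
    {Hgs : Lp (Fin p → ℂ) 1 (volume.restrict S) → Lp (Fin q → ℂ) 1 (volume.restrict S')}
    {Hα : Lp (Fin p → ℂ) 1 (volume.restrict S') → Lp (Fin p → ℂ) 1 (volume.restrict S)}

/-- The transforms of `M₁₁f` and `M₂₁f`. -/
theorem HalfOps.block (hS : MeasurableSet S) (hS' : MeasurableSet S')
    (sol : AlgSol (half S) (half S') a b c d g)
    (A : HalfOps S S' a b c d g Tα Tαs Tβ Tβs Hγ Hδ Hg)
    (f : Lp (Fin p → ℂ) 1 (volume.restrict S)) :
    vecHat S ⇑(Tα (Tαs f) - Tβ (Tβs f))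
        = (1 + a) *ᵥ vecHat S (Tαs f) - b *ᵥ vecHat S (Tβs f) ∧
      vecHat S' ⇑(Hγ (Tαs f) - Hδ (Tβs f))
        = c *ᵥ vecHat S (Tαs f) - (1 + d) *ᵥ vecHat S (Tβs f) := by
  rw [vecHat_sub hS, vecHat_sub hS']
  exact sol.block (A.tαs f) (A.tβs f) (A.tα _) (A.tβ _) (A.hγ _) (A.hδ _)

/-- The first columns of `Ω M = 1` and `M Ω = 1`. -/
theorem HalfOps.identities (hS : MeasurableSet S) (hS' : MeasurableSet S')
    (sol : AlgSol (half S) (half S') a b c d g)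
    (A : HalfOps S S' a b c d g Tα Tαs Tβ Tβs Hγ Hδ Hg)
    (B : HalfOps S' S d c b a gᴴ Tδ Tδs Tγ Tγs Hβ Hα Hgs)
    (f : Lp (Fin p → ℂ) 1 (volume.restrict S)) :
    (Tα (Tαs f) - Tβ (Tβs f)) + Hg (Hγ (Tαs f) - Hδ (Tβs f)) = f ∧
      (Hγ (Tαs f) - Hδ (Tβs f)) + Hgs (Tα (Tαs f) - Tβ (Tβs f)) = 0 ∧
      (Tα (Tαs f) - Tβ (Tβs f)) + (Hβ (Tδs (Hgs f)) - Hα (Tγs (Hgs f))) = f ∧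
      (Hγ (Tαs f) - Hδ (Tβs f)) + (Tδ (Tδs (Hgs f)) - Tγ (Tγs (Hgs f))) = 0 := by
  obtain ⟨m1, m2⟩ := A.block hS hS' sol f
  obtain ⟨n1, n2⟩ := B.block hS' hS sol.symm (Hgs f)
  have hzero : vecHat S' ⇑(0 : Lp (Fin q → ℂ) 1 (volume.restrict S')) = 0 := by
    have := vecHat_sub hS' (0 : Lp (Fin q → ℂ) 1 (volume.restrict S')) 0
    rwa [sub_self, sub_self] at this
  have hh₁ := A.hg (Hγ (Tαs f) - Hδ (Tβs f))
  have hh₂ := B.hg (Tα (Tαs f) - Tβ (Tβs f))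
  have hm := vecHat_mem hS' (Hγ (Tαs f) - Hδ (Tβs f))
  rw [m2] at hh₁ hm
  rw [m1] at hh₂
  obtain ⟨r1, r2⟩ := sol.right (vecHat_mem hS f) (A.tαs f) (A.tβs f) hh₁ hh₂ hm
  obtain ⟨l1, l2⟩ := sol.left (vecHat_mem hS f) (A.tαs f) (A.tβs f) (B.hg f)
    (B.tαs (Hgs f)) (B.tβs (Hgs f))
  refine ⟨vecHat_inj hS ?_, vecHat_inj hS' ?_, vecHat_inj hS ?_, vecHat_inj hS' ?_⟩
  · rw [vecHat_add hS, m1, r1]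
  · rw [vecHat_add hS', m2, r2, hzero]
  · rw [vecHat_add hS, m1, n2, l1]
  · rw [vecHat_add hS', m2, n1, l2, hzero]

/-- The identity `M₁₁ g = -b`, columnwise. -/
theorem HalfOps.column (hS : MeasurableSet S) (hS' : MeasurableSet S')
    (sol : AlgSol (half S) (half S') a b c d g)
    (A : HalfOps S S' a b c d g Tα Tαs Tβ Tβs Hγ Hδ Hg) (j : Fin q)
    (fg fb : Lp (Fin p → ℂ) 1 (volume.restrict S))
    (hfg : vecHat S fg = g.col j) (hfb : vecHat S fb = b.col j) :
    Tα (Tαs fg) - Tβ (Tβs fg) = -fb := by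
  refine vecHat_inj hS ?_
  rw [(A.block hS hS' sol fg).1, vecHat_neg hS, hfb]
  refine sol.column j ?_ ?_
  · rw [← hfg]; exact A.tαs fg
  · rw [← hfg]; exact A.tβs fg

end Operators

end Analysis

/-! ### Block inversion -/

/-- Block inversion: if `M` is a two-sided inverse of `Ω = [1, H; K, 1]`, then the Schur
complements of `Ω` invert the diagonal blocks of `M`. -/
theorem schur_inverse {X Y : Type*} [NormedAddCommGroup X] [NormedSpace ℂ X]
    [NormedAddCommGroup Y] [NormedSpace ℂ Y] (M₁₁ : X →L[ℂ] X) (M₁₂ H : Y →L[ℂ] X)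
    (M₂₁ K : X →L[ℂ] Y) (M₂₂ : Y →L[ℂ] Y)
    (hX : ∀ f, M₁₁ f + H (M₂₁ f) = f ∧ M₂₁ f + K (M₁₁ f) = 0 ∧
      M₁₁ f + M₁₂ (K f) = f ∧ M₂₁ f + M₂₂ (K f) = 0)
    (hY : ∀ f, M₂₂ f + K (M₁₂ f) = f ∧ M₁₂ f + H (M₂₂ f) = 0 ∧
      M₂₂ f + M₂₁ (H f) = f ∧ M₁₂ f + M₁₁ (H f) = 0) :
    ∃ (N₁₁ : X →L[ℂ] X) (N₂₂ : Y →L[ℂ] Y),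
      (N₁₁.comp M₁₁ = ContinuousLinearMap.id ℂ X ∧ M₁₁.comp N₁₁ = ContinuousLinearMap.id ℂ X) ∧
      (N₂₂.comp M₂₂ = ContinuousLinearMap.id ℂ Y ∧ M₂₂.comp N₂₂ = ContinuousLinearMap.id ℂ Y) ∧
      H = -(N₁₁.comp M₁₂) ∧ H = -(M₁₂.comp N₂₂) ∧
      K = -(M₂₁.comp N₁₁) ∧ K = -(N₂₂.comp M₂₁) := by
  have x1 : ∀ f, H (M₂₁ f) = f - M₁₁ f := fun f => eq_sub_of_add_eq' (hX f).1
  have x2 : ∀ f, K (M₁₁ f) = -M₂₁ f := fun f => eq_neg_of_add_eq_zero_right (hX f).2.1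
  have x3 : ∀ f, M₁₂ (K f) = f - M₁₁ f := fun f => eq_sub_of_add_eq' (hX f).2.2.1
  have x4 : ∀ f, M₂₂ (K f) = -M₂₁ f := fun f => eq_neg_of_add_eq_zero_right (hX f).2.2.2
  have y1 : ∀ f, K (M₁₂ f) = f - M₂₂ f := fun f => eq_sub_of_add_eq' (hY f).1
  have y2 : ∀ f, H (M₂₂ f) = -M₁₂ f := fun f => eq_neg_of_add_eq_zero_right (hY f).2.1
  have y3 : ∀ f, M₂₁ (H f) = f - M₂₂ f := fun f => eq_sub_of_add_eq' (hY f).2.2.1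
  have y4 : ∀ f, M₁₁ (H f) = -M₁₂ f := fun f => eq_neg_of_add_eq_zero_right (hY f).2.2.2
  refine ⟨ContinuousLinearMap.id ℂ X - H.comp K, ContinuousLinearMap.id ℂ Y - K.comp H,
    ⟨?_, ?_⟩, ⟨?_, ?_⟩, ?_, ?_, ?_, ?_⟩ <;> refine ContinuousLinearMap.ext fun f => ?_ <;>
    simp [x1, x2, x3, x4, y1, y2, y3, y4]

/-- Theorem 1.1, formulas for the Hankel operators and for `g`. -/
theorem stmt2 {p q : ℕ}
    (a : MatF p p) (b : MatF p q) (c : MatF q p) (d : MatF q q)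
    (ha : L1Plus a) (hb : L1Plus b) (hc : L1Minus c) (hd : L1Minus d)
    (g : MatF p q) (hg : L1Plus g) (hsol : EGSol a b c d g)
    (Hg : L1M q →L[ℂ] L1P p) (hHg : IsHP g Hg)
    (Hgs : L1P p →L[ℂ] L1M q) (hHgs : IsHM (adjF g) Hgs)
    (Tpα : L1P p →L[ℂ] L1P p) (hTpα : IsTP 1 a Tpα)
    (Tpαs : L1P p →L[ℂ] L1P p) (hTpαs : IsTP 1 (adjF a) Tpαs)
    (Tpβ : L1P q →L[ℂ] L1P p) (hTpβ : IsTP 0 b Tpβ)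
    (Tpβs : L1P p →L[ℂ] L1P q) (hTpβs : IsTP 0 (adjF b) Tpβs)
    (Tmδ : L1M q →L[ℂ] L1M q) (hTmδ : IsTM 1 d Tmδ)
    (Tmδs : L1M q →L[ℂ] L1M q) (hTmδs : IsTM 1 (adjF d) Tmδs)
    (Tmγ : L1M p →L[ℂ] L1M q) (hTmγ : IsTM 0 c Tmγ)
    (Tmγs : L1M q →L[ℂ] L1M p) (hTmγs : IsTM 0 (adjF c) Tmγs)
    (Hpα : L1M p →L[ℂ] L1P p) (hHpα : IsHP a Hpα)
    (Hpβ : L1M q →L[ℂ] L1P p) (hHpβ : IsHP b Hpβ)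
    (Hmγ : L1P p →L[ℂ] L1M q) (hHmγ : IsHM c Hmγ)
    (Hmδ : L1P q →L[ℂ] L1M q) (hHmδ : IsHM d Hmδ) :
    ∃ (N₁₁ : L1P p →L[ℂ] L1P p) (N₂₂ : L1M q →L[ℂ] L1M q),
      (N₁₁.comp (Tpα.comp Tpαs - Tpβ.comp Tpβs) = ContinuousLinearMap.id ℂ (L1P p) ∧
        (Tpα.comp Tpαs - Tpβ.comp Tpβs).comp N₁₁ = ContinuousLinearMap.id ℂ (L1P p)) ∧
      (N₂₂.comp (Tmδ.comp Tmδs - Tmγ.comp Tmγs) = ContinuousLinearMap.id ℂ (L1M q) ∧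
        (Tmδ.comp Tmδs - Tmγ.comp Tmγs).comp N₂₂ = ContinuousLinearMap.id ℂ (L1M q)) ∧
      Hg = -(N₁₁.comp (Hpβ.comp Tmδs - Hpα.comp Tmγs)) ∧
      Hg = -((Hpβ.comp Tmδs - Hpα.comp Tmγs).comp N₂₂) ∧
      Hgs = -((Hmγ.comp Tpαs - Hmδ.comp Tpβs).comp N₁₁) ∧
      Hgs = -(N₂₂.comp (Hmγ.comp Tpαs - Hmδ.comp Tpβs)) ∧
      (∀ j : Fin q, ∀ fg fb : L1P p, ⇑fg =ᵐ[μP] colF g j → ⇑fb =ᵐ[μP] colF b j →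
        (Tpα.comp Tpαs - Tpβ.comp Tpβs) fg = -fb) ∧
      (∀ j : Fin p, ∀ fgs fc : L1M q, ⇑fgs =ᵐ[μM] colF (adjF g) j →
        ⇑fc =ᵐ[μM] colF c j → (Tmδ.comp Tmδs - Tmγ.comp Tmγs) fgs = -fc) := by
  have mP : MeasurableSet (Ici (0 : ℝ)) := measurableSet_Ici
  have mM : MeasurableSet (Iic (0 : ℝ)) := measurableSet_Iic
  have uPM : Ici (0 : ℝ) ∪ Iic 0 = univ := by rw [union_comm]; exact Iic_union_Ici
  have uMP : Iic (0 : ℝ) ∪ Ici 0 = univ := Iic_union_Ici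
  have ias := integrable_adjF ha.1
  have ibs := integrable_adjF hb.1
  have ics := integrable_adjF hc.1
  have ids := integrable_adjF hd.1
  have igs := integrable_adjF hg.1
  have memP : ∀ {k m : ℕ} {f : MatF k m}, (∀ i j, Integrable fun t => f t i j) → AeZeroNeg f →
      matHat f ∈ matIn (half (Ici 0)) k m := fun hf h0 =>
    matHat_mem hf (h0.mono fun t ht h => ht (not_le.1 h))
  have memM : ∀ {k m : ℕ} {f : MatF k m}, (∀ i j, Integrable fun t => f t i j) → AeZeroPos f →
      matHat f ∈ matIn (half (Iic 0)) k m := fun hf h0 =>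
    matHat_mem hf (h0.mono fun t ht h => ht (not_le.1 h))
  obtain ⟨s1, s2, s3, s4⟩ := hsol
  have sol : AlgSol (half (Ici 0)) (half (Iic 0)) (matHat a) (matHat b) (matHat c) (matHat d)
      (matHat g) :=
    { split := half_splits
      ha := memP ha.1 (.of_forall ha.2)
      hb := memP hb.1 (.of_forall hb.2)
      hc := memM hc.1 (.of_forall hc.2)
      hd := memM hd.1 (.of_forall hd.2)
      hg := memP hg.1 (.of_forall hg.2)
      h1 := by
        have i1 := integrable_conv hg.1 hc.1
        rw [← matHat_conv hg.1 hc.1, ← matHat_add ha.1 i1]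
        exact memM (fun i j => (ha.1 i j).add (i1 i j)) s1
      h2 := by
        have i1 := integrable_conv igs ha.1
        have i2 : ∀ i j, Integrable fun t => (adjF g t + conv (adjF g) a t) i j :=
          fun i j => (igs i j).add (i1 i j)
        rw [← matHat_adjF, ← matHat_conv igs ha.1, ← matHat_add igs i1, ← matHat_add i2 hc.1]
        exact memP (fun i j => (i2 i j).add (hc.1 i j)) s2
      h3 := by
        have i1 := integrable_conv igs hb.1
        rw [← matHat_adjF, ← matHat_conv igs hb.1, ← matHat_add hd.1 i1]
        exact memP (fun i j => (hd.1 i j).add (i1 i j)) s3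
      h4 := by
        have i1 := integrable_conv hg.1 hd.1
        have i2 : ∀ i j, Integrable fun t => (g t + conv g d t) i j :=
          fun i j => (hg.1 i j).add (i1 i j)
        rw [← matHat_conv hg.1 hd.1, ← matHat_add hg.1 i1, ← matHat_add i2 hb.1]
        exact memM (fun i j => (i2 i j).add (hb.1 i j)) s4 }
  have A : HalfOps (Ici 0) (Iic 0) (matHat a) (matHat b) (matHat c) (matHat d) (matHat g)
      Tpα Tpαs Tpβ Tpβs Hmγ Hmδ Hg :=
    { tα := fun f => isProj_one mP uPM ha.1 f _ (hTpα f)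
      tαs := fun f => by
        rw [conjTranspose_add, conjTranspose_one, ← matHat_adjF]
        exact isProj_one mP uPM ias f _ (hTpαs f)
      tβ := fun f => isProj_zero mP uPM hb.1 f _ (hTpβ f)
      tβs := fun f => by
        rw [← matHat_adjF]
        exact isProj_zero mP uPM ibs f _ (hTpβs f)
      hγ := fun f => isProj_hankel mP mM uMP hc.1 f _ (hHmγ f)
      hδ := fun f => isProj_hankel mP mM uMP hd.1 f _ (hHmδ f)
      hg := fun f => isProj_hankel mM mP uPM hg.1 f _ (hHg f) }
  have B : HalfOps (Iic 0) (Ici 0) (matHat d) (matHat c) (matHat b) (matHat a) (matHat g)ᴴ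
      Tmδ Tmδs Tmγ Tmγs Hpβ Hpα Hgs :=
    { tα := fun f => isProj_one mM uMP hd.1 f _ (hTmδ f)
      tαs := fun f => by
        rw [conjTranspose_add, conjTranspose_one, ← matHat_adjF]
        exact isProj_one mM uMP ids f _ (hTmδs f)
      tβ := fun f => isProj_zero mM uMP hc.1 f _ (hTmγ f)
      tβs := fun f => by
        rw [← matHat_adjF]
        exact isProj_zero mM uMP ics f _ (hTmγs f)
      hγ := fun f => isProj_hankel mM mP uPM hb.1 f _ (hHpβ f)
      hδ := fun f => isProj_hankel mM mP uPM ha.1 f _ (hHpα f)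
      hg := fun f => by
        rw [← matHat_adjF]
        exact isProj_hankel mP mM uMP igs f _ (hHgs f) }
  -- The reflected problem has solution `g*`, so its partner involves `g** = g`.
  have A' : HalfOps (Ici 0) (Iic 0) (matHat a) (matHat b) (matHat c) (matHat d) (matHat g)ᴴᴴ
      Tpα Tpαs Tpβ Tpβs Hmγ Hmδ Hg := by
    rwa [conjTranspose_conjTranspose]
  obtain ⟨N₁₁, N₂₂, e1, e2, e3, e4, e5, e6⟩ := schur_inverse
    (Tpα.comp Tpαs - Tpβ.comp Tpβs) (Hpβ.comp Tmδs - Hpα.comp Tmγs) Hg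
    (Hmγ.comp Tpαs - Hmδ.comp Tpβs) Hgs (Tmδ.comp Tmδs - Tmγ.comp Tmγs)
    (fun f => A.identities mP mM sol B f) (fun f => B.identities mM mP sol.symm A' f)
  refine ⟨N₁₁, N₂₂, e1, e2, e3, e4, e5, e6, fun j fg fb hfg hfb => ?_, fun j fgs fc hfg hfc => ?_⟩
  · exact A.column mP mM sol j fg fb
      (vecHat_col mP (fun t ht => hg.2 t (not_le.1 ht)) j hfg)
      (vecHat_col mP (fun t ht => hb.2 t (not_le.1 ht)) j hfb)
  · refine B.column mM mP sol.symm j fgs fc ?_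
      (vecHat_col mM (fun t ht => hc.2 t (not_le.1 ht)) j hfc)
    rw [← matHat_adjF]
    refine vecHat_col mM (fun t ht => ?_) j hfg
    have h0 : g (-t) = 0 := hg.2 (-t) (neg_lt_zero.2 (not_le.1 ht))
    rw [adjF, h0, conjTranspose_zero]
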